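/- Let R be a commutative ring and let I = (f_1, …, f_n) be a finitely generated ideal of R. Then Loc(R/I)^⊥ = Loc(R_{f_1}, …, R_{f_n}) in D(R). -/

import Mathlib

open CategoryTheory CategoryTheory.Limits CategoryTheory.Pretriangulated ZeroObject

universe w w' v u

section TriangulatedDefs

variable {T : Type u} [Category.{v} T] [Preadditive T] [HasZeroObject T]
  [HasShift T ℤ] [∀ n : ℤ, (shiftFunctor T n).Additive] [Pretriangulated T]

/-- A localizing subcategory of a (pre)triangulated category, encoded as a set of
objects: it is closed under isomorphisms, contains the zero object, is stable
under shifts, closed under cones of distinguished triangles (hence a full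
triangulated subcategory), and closed under arbitrary small coproducts
(phrased via colimit cofans, so that no global existence of coproducts
is needed). -/
structure IsLocalizingSub (S : Set T) : Prop where
  zero_mem : (0 : T) ∈ S
  mem_of_iso : ∀ {x y : T}, (x ≅ y) → x ∈ S → y ∈ S
  shift_mem : ∀ (n : ℤ) {x : T}, x ∈ S → x⟦n⟧ ∈ S
  cone_mem : ∀ (Tr : Triangle T), Tr ∈ distinguishedTriangles →
    Tr.obj₁ ∈ S → Tr.obj₂ ∈ S → Tr.obj₃ ∈ S
  coprod_mem : ∀ {ι : Type w} (f : ι → T) (c : Cofan f), IsColimit c →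
    (∀ i, f i ∈ S) → c.pt ∈ S

/-- A colocalizing subcategory: as `IsLocalizingSub` but with products instead
of coproducts. -/
structure IsColocalizingSub (S : Set T) : Prop where
  zero_mem : (0 : T) ∈ S
  mem_of_iso : ∀ {x y : T}, (x ≅ y) → x ∈ S → y ∈ S
  shift_mem : ∀ (n : ℤ) {x : T}, x ∈ S → x⟦n⟧ ∈ S
  cone_mem : ∀ (Tr : Triangle T), Tr ∈ distinguishedTriangles →
    Tr.obj₁ ∈ S → Tr.obj₂ ∈ S → Tr.obj₃ ∈ S
  prod_mem : ∀ {ι : Type w} (f : ι → T) (c : Fan f), IsLimit c →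
    (∀ i, f i ∈ S) → c.pt ∈ S

/-- `Loc S`: the smallest localizing subcategory containing the set of
objects `S` (the intersection of all localizing subcategories containing it). -/
def Loc (S : Set T) : Set T :=
  ⋂₀ {L : Set T | IsLocalizingSub.{w} L ∧ S ⊆ L}

/-- The right orthogonal of a set of objects. -/
def rightOrth (C : Set T) : Set T :=
  {x : T | ∀ ⦃c : T⦄, c ∈ C → ∀ (g : c ⟶ x), g = 0}

end TriangulatedDefs

section CompactDefs

variable {T : Type u} [Category.{v} T] [Preadditive T]

/-- The canonical comparison map `⨁ᵢ Hom(x, fᵢ) →+ Hom(x, ∐ f)` associated to a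
cofan `c` on a family `f`. -/
noncomputable def cofanHomComparison {ι : Type w} (x : T) (f : ι → T) (c : Cofan f) :
    (Π₀ i, (x ⟶ f i)) →+ (x ⟶ c.pt) :=
  letI := Classical.decEq ι
  DFinsupp.sumAddHom (fun i => AddMonoidHom.mk' (fun φ => φ ≫ c.inj i)
    (fun φ ψ => Preadditive.add_comp _ _ _ φ ψ (c.inj i)))

/-- An object `x` is compact if `Hom(x, -)` commutes with arbitrary small
coproducts, i.e. for every colimit cofan on a family `f`, the canonical map
`⨁ᵢ Hom(x, fᵢ) → Hom(x, ∐ f)` is bijective. -/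
def IsCompactObj (x : T) : Prop :=
  ∀ ⦃ι : Type w⦄ (f : ι → T) (c : Cofan f), IsColimit c →
    Function.Bijective (cofanHomComparison x f c)

end CompactDefs

section DR

variable (R : Type u) [CommRing R] [HasDerivedCategory.{w'} (ModuleCat.{u} R)]

/-- The `R`-module `M`, regarded as an object of the derived category `D(R)`,
as a complex concentrated in degree `0`. -/
noncomputable def smod (M : ModuleCat.{u} R) : DerivedCategory (ModuleCat.{u} R) :=
  (DerivedCategory.singleFunctor (ModuleCat.{u} R) 0).obj M

end DR

/-!
Both sides are the class of *Koszul-acyclic* complexes, those `E` whose iterated cone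
`E // (f₁, …, fₙ)` vanishes.

If `E` is right orthogonal to the shifts of all modules killed by `I`, it is Koszul-acyclic, by
induction on `n`: multiplication by `f` on a module killed by `l` has kernel and cokernel killed by
`f :: l`, so the cone of `f` on `E` is right orthogonal to the modules killed by `l` alone.
Conversely a Koszul-acyclic `E` receives only zero maps from such modules, and it is built from the
telescopes `E[1/fᵢ]`. Since a coproduct of Koszul-acyclic complexes is again one, the class is
localizing; it contains each `R_f` because `f` is invertible on `R_f` and zero on `R/I`.

It remains to generate the modules killed by `I` from `R/I` and the complexes on which `f` is
invertible from `R_f`. In both cases every object `X` of the class is covered by a coproduct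
`F ⟶ X` of generators which is surjective on homology and has its fiber in the class. Iterating
gives connecting maps `X ⟶ K[1] ⟶ K'[2] ⟶ ⋯`, each with cone generated and zero on homology; their
telescope vanishes, so `X` is generated.
-/

section DistinguishedTriangles

variable {C : Type u} [Category.{v} C] [Preadditive C] [HasZeroObject C]
  [HasShift C ℤ] [∀ n : ℤ, (shiftFunctor C n).Additive] [Pretriangulated C]
  {X Y Z : C}

lemma trW_of_comp_left [IsTriangulated C] (P : ObjectProperty C) [P.IsTriangulated]
    [P.IsClosedUnderIsomorphisms] {k : X ⟶ Y} {l : Y ⟶ Z} (hl : P.trW l) (hkl : P.trW (k ≫ l)) :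
    P.trW k := by
  obtain ⟨_, _, _, hk⟩ := distinguished_cocone_triangle k
  obtain ⟨_, _, _, hl', hl⟩ := hl
  obtain ⟨_, _, _, hkl', hkl⟩ := hkl
  exact ⟨_, _, _, hk,
    P.ext_of_isTriangulatedClosed₁ _ (Triangulated.someOctahedron rfl hk hl' hkl').mem hkl hl⟩

end DistinguishedTriangles

section Coproducts

variable {C : Type u} [Category.{v} C] [Preadditive C] [HasZeroObject C]
  [HasShift C ℤ] [∀ n : ℤ, (shiftFunctor C n).Additive] [Pretriangulated C]
  {J : Type*} {D : J → Triangle C} {D' : Triangle C}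

lemma eq_zero_of_hom₃_comp_eq_zero (hD : ∀ j, D j ∈ distTriang C) (hD' : D' ∈ distTriang C)
    (φ : ∀ j, D j ⟶ D') (h₁ : IsColimit (Cofan.mk D'.obj₁ fun j ↦ (φ j).hom₁))
    (h₂ : IsColimit (Cofan.mk D'.obj₂ fun j ↦ (φ j).hom₂)) {W : C}
    (g : D'.obj₃ ⟶ W) (hg : ∀ j, (φ j).hom₃ ≫ g = 0) : g = 0 := by
  have h₁' := isColimitCofanMkObjOfIsColimit (shiftFunctor C (1 : ℤ)) _ _ h₁
  have h₂' := isColimitCofanMkObjOfIsColimit (shiftFunctor C (1 : ℤ)) _ _ h₂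
  obtain ⟨h, rfl⟩ := D'.yoneda_exact₃ hD' g (Cofan.IsColimit.hom_ext h₂ _ _ fun j ↦ by
    simp [← (φ j).comm₂_assoc, hg])
  have hm (j : J) : ∃ m : (D j).obj₂⟦(1 : ℤ)⟧ ⟶ W,
      (φ j).hom₁⟦1⟧' ≫ h = (D j).mor₁⟦1⟧' ≫ m := by
    obtain ⟨m, hm⟩ := (D j).rotate.yoneda_exact₃ (rot_of_distTriang _ (hD j))
      ((φ j).hom₁⟦1⟧' ≫ h) (((φ j).comm₃_assoc h).trans (hg j))
    exact ⟨-m, hm.trans ((Preadditive.neg_comp _ _).trans (Preadditive.comp_neg _ _).symm)⟩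
  choose m hm using hm
  have hh : h = D'.mor₁⟦1⟧' ≫ Cofan.IsColimit.desc h₂' m :=
    Cofan.IsColimit.hom_ext h₁' _ _ fun j ↦ by
      have := Cofan.IsColimit.fac h₂' m j
      dsimp at this ⊢
      rw [hm, ← Functor.map_comp_assoc, ← (φ j).comm₁, Functor.map_comp_assoc, this]
  rw [hh, comp_distTriang_mor_zero₃₁_assoc _ hD', zero_comp]

lemma exists_hom₃_comp_eq (hD : ∀ j, D j ∈ distTriang C) (hD' : D' ∈ distTriang C)
    (φ : ∀ j, D j ⟶ D') (h₁ : IsColimit (Cofan.mk D'.obj₁ fun j ↦ (φ j).hom₁))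
    (h₂ : IsColimit (Cofan.mk D'.obj₂ fun j ↦ (φ j).hom₂)) {W : C}
    (y : ∀ j, (D j).obj₃ ⟶ W) : ∃ g : D'.obj₃ ⟶ W, ∀ j, (φ j).hom₃ ≫ g = y j := by
  have h₁' := isColimitCofanMkObjOfIsColimit (shiftFunctor C (1 : ℤ)) _ _ h₁
  have hk (j : J) := Cofan.IsColimit.fac h₂ (fun j ↦ (D j).mor₂ ≫ y j) j
  set k := Cofan.IsColimit.desc h₂ (fun j ↦ (D j).mor₂ ≫ y j)
  obtain ⟨x, hx⟩ := D'.yoneda_exact₂ hD' k (Cofan.IsColimit.hom_ext h₁ _ _ fun j ↦ by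
    dsimp at hk ⊢
    rw [← (φ j).comm₁_assoc, hk, comp_distTriang_mor_zero₁₂_assoc _ (hD j), zero_comp, comp_zero])
  have hv (j : J) : ∃ v, y j - (φ j).hom₃ ≫ x = (D j).mor₃ ≫ v := by
    refine (D j).yoneda_exact₃ (hD j) _ ?_
    rw [Preadditive.comp_sub, (φ j).comm₂_assoc, ← hx]
    exact sub_eq_zero.2 (hk j).symm
  choose v hv using hv
  refine ⟨x + D'.mor₃ ≫ Cofan.IsColimit.desc h₁' v, fun j ↦ ?_⟩
  have := Cofan.IsColimit.fac h₁' v j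
  dsimp at this
  rw [Preadditive.comp_add, ← (φ j).comm₃_assoc, this, ← hv, add_sub_cancel]

lemma nonempty_isColimit_hom₃ (hD : ∀ j, D j ∈ distTriang C) (hD' : D' ∈ distTriang C)
    (φ : ∀ j, D j ⟶ D') (h₁ : IsColimit (Cofan.mk D'.obj₁ fun j ↦ (φ j).hom₁))
    (h₂ : IsColimit (Cofan.mk D'.obj₂ fun j ↦ (φ j).hom₂)) :
    Nonempty (IsColimit (Cofan.mk D'.obj₃ fun j ↦ (φ j).hom₃)) := by
  have desc {W : C} := exists_hom₃_comp_eq (W := W) hD hD' φ h₁ h₂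
  refine ⟨Cofan.IsColimit.mk _ (fun s ↦ (desc s.inj).choose) (fun s ↦ (desc s.inj).choose_spec)
    fun s m hm ↦ sub_eq_zero.1 (eq_zero_of_hom₃_comp_eq_zero hD hD' φ h₁ h₂ _ fun j ↦ ?_)⟩
  rw [Preadditive.comp_sub, sub_eq_zero]
  exact (hm j).trans ((desc s.inj).choose_spec j).symm

lemma isStableUnderCoproductsOfShape_trW (P : ObjectProperty C) [P.IsClosedUnderIsomorphisms]
    [P.IsClosedUnderColimitsOfShape (Discrete J)] :
    P.trW.IsStableUnderCoproductsOfShape J := by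
  refine MorphismProperty.IsStableUnderCoproductsOfShape.mk _ J fun X Y _ _ f hf ↦ ?_
  choose Z g h hT hZ using hf
  obtain ⟨Z', g', h', hT'⟩ := distinguished_cocone_triangle (Limits.Sigma.map f)
  let φ (j : J) := completeDistinguishedTriangleMorphism _ _ (hT j) hT' (Sigma.ι X j) (Sigma.ι Y j)
    (Sigma.ι_map f j).symm
  obtain ⟨hZ'⟩ := nonempty_isColimit_hom₃ hT hT' φ (coproductIsCoproduct X) (coproductIsCoproduct Y)
  exact ObjectProperty.trW.mk P hT' (P.prop_of_isColimit hZ' fun j ↦ hZ j.as)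

end Coproducts

section Telescope

variable {C : Type u} [Category.{v} C] (X : ℕ → C) [HasCoproduct X]

/-- The endomorphism of `∐ Xₙ` induced by a sequence of maps `sₙ : Xₙ ⟶ Xₙ₊₁`; the cone of
`𝟙 - sequenceShift X s` is the telescope (homotopy colimit) of the sequence. -/
noncomputable def sequenceShift (s : ∀ n, X n ⟶ X (n + 1)) : ∐ X ⟶ ∐ X :=
  Sigma.desc fun n ↦ s n ≫ Sigma.ι X (n + 1)

lemma ι_sequenceShift (s : ∀ n, X n ⟶ X (n + 1)) (n : ℕ) :
    Sigma.ι X n ≫ sequenceShift X s = s n ≫ Sigma.ι X (n + 1) :=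
  Sigma.ι_desc _ _

variable [Preadditive C] [HasZeroObject C]
  [HasShift C ℤ] [∀ n : ℤ, (shiftFunctor C n).Additive] [Pretriangulated C]

lemma nonempty_iso_of_constant_telescope (A : C) [HasCoproduct fun _ : ℕ ↦ A] {Z : C}
    {p : ∐ (fun _ : ℕ ↦ A) ⟶ Z} {q : Z ⟶ (∐ fun _ : ℕ ↦ A)⟦(1 : ℤ)⟧}
    (hT : Triangle.mk (𝟙 _ - sequenceShift (fun _ : ℕ ↦ A) fun _ ↦ 𝟙 A) p q ∈ distTriang C) :
    Nonempty (A ≅ Z) := by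
  let ι := Sigma.ι (fun _ : ℕ ↦ A)
  let d := 𝟙 _ - sequenceShift (fun _ : ℕ ↦ A) fun _ ↦ 𝟙 A
  have ι_comp_d (n : ℕ) : ι n ≫ d = ι n - ι (n + 1) := by
    simp only [ι, d, Preadditive.comp_sub, Category.comp_id, ι_sequenceShift, Category.id_comp]
  have hp : Epi p := by
    let r : ∐ (fun _ : ℕ ↦ A) ⟶ ∐ fun _ : ℕ ↦ A :=
      Sigma.desc fun n ↦ -∑ k ∈ Finset.range n, ι k
    have hr : d ≫ r = 𝟙 _ := Sigma.hom_ext _ _ fun n ↦ by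
      rw [← Category.assoc, ι_comp_d]
      simp [r, ι, Finset.sum_range_succ]
    have : Mono d := mono_of_mono_fac hr
    exact ((Triangle.mk d p q).mor₃_eq_zero_iff_epi₂ hT).1
      (((Triangle.mk d p q).mor₃_eq_zero_iff_mono₁ hT).2 this)
  have hι (n : ℕ) : ι n ≫ p = ι 0 ≫ p := by
    induction n with
    | zero => rfl
    | succ n ih =>
      rw [← ih, eq_comm, ← sub_eq_zero, ← Preadditive.sub_comp, ← ι_comp_d, Category.assoc,
        show d ≫ p = 0 from comp_distTriang_mor_zero₁₂ _ hT, comp_zero]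
  have hd : d ≫ Limits.Sigma.desc (fun _ ↦ 𝟙 A) = 0 := Sigma.hom_ext _ _ fun n ↦ by
    rw [← Category.assoc, ι_comp_d]
    simp [ι]
  obtain ⟨a, ha⟩ : ∃ a : Z ⟶ A, Limits.Sigma.desc (fun _ ↦ 𝟙 A) = p ≫ a :=
    Triangle.yoneda_exact₂ _ hT _ hd
  have hιa (n : ℕ) : ι n ≫ p ≫ a = 𝟙 A := by rw [← ha]; exact Sigma.ι_desc _ _
  refine ⟨⟨ι 0 ≫ p, a, by rw [Category.assoc, hιa], ?_⟩⟩
  rw [← cancel_epi p]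
  exact Sigma.hom_ext _ _ fun n ↦ by
    rw [Category.comp_id, ← Category.assoc p, ← Category.assoc (Sigma.ι _ _), hιa n,
      Category.id_comp, ← hι n]

lemma prop_of_prop_telescope [IsTriangulated C] (P : ObjectProperty C) [P.IsTriangulated]
    [P.IsClosedUnderIsomorphisms] [P.IsClosedUnderColimitsOfShape (Discrete ℕ)]
    [HasCoproduct fun _ : ℕ ↦ X 0] (s : ∀ n, X n ⟶ X (n + 1)) (hs : ∀ n, P.trW (s n))
    (hσ : P.trW (𝟙 _ - sequenceShift X s)) : P (X 0) := by
  -- `X 0` is the telescope of the constant sequence, which `t` maps to the sequence `X`.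
  let t (n : ℕ) : X 0 ⟶ X n := Nat.rec (𝟙 _) (fun n t ↦ t ≫ s n) n
  have ht (n : ℕ) : P.trW (t n) := by
    induction n with
    | zero => exact P.trW.id_mem _
    | succ n ih => exact P.trW.comp_mem _ _ ih (hs n)
  let c := Limits.Sigma.map t
  have hc : P.trW c := by
    have := isStableUnderCoproductsOfShape_trW (J := ℕ) P
    exact MorphismProperty.colimMap _ fun n ↦ ht n.as
  have hcomm : (𝟙 _ - sequenceShift _ fun _ ↦ 𝟙 (X 0)) ≫ c = c ≫ (𝟙 _ - sequenceShift X s) :=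
    Sigma.hom_ext _ _ fun n ↦ by
      simp only [Preadditive.sub_comp, Preadditive.comp_sub, Category.id_comp, Category.comp_id,
        ← Category.assoc, ι_sequenceShift, c, Sigma.ι_map]
      simp [ι_sequenceShift, t]
  have hsh := trW_of_comp_left P hc (hcomm ▸ P.trW.comp_mem _ _ hc hσ)
  obtain ⟨Z, p, q, hT, hZ⟩ := hsh
  obtain ⟨e⟩ := nonempty_iso_of_constant_telescope _ hT
  exact P.prop_of_iso e.symm hZ

end Telescope

section Linear

variable {R : Type*} [CommRing R] {C : Type u} [Category.{v} C] [Preadditive C] [Linear R C]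

/-- The objects of an `R`-linear category on which `f : R` acts invertibly. -/
def invertibleSMul (f : R) : ObjectProperty C := fun Y ↦ IsIso (f • 𝟙 Y)

/-- The objects of an `R`-linear category which are annihilated by all elements of `l`. -/
def annihilatedBy (l : List R) : ObjectProperty C := fun X ↦ ∀ f ∈ l, f • 𝟙 X = 0

instance (l : List R) : (annihilatedBy l : ObjectProperty C).IsClosedUnderSubobjects where
  prop_of_mono i _ hY f hf := by
    rw [← cancel_mono i, Linear.smul_comp, Category.id_comp, ← Category.comp_id i,
      ← Linear.comp_smul, hY f hf, comp_zero, zero_comp]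

instance (l : List R) : (annihilatedBy l : ObjectProperty C).IsClosedUnderQuotients where
  prop_of_epi p _ hX f hf := by
    rw [← cancel_epi p, Linear.comp_smul, Category.comp_id, ← Category.id_comp p,
      ← Linear.smul_comp, hX f hf, zero_comp, comp_zero]

instance (l : List R) (J : Type*) [Category* J] :
    (annihilatedBy l : ObjectProperty C).IsClosedUnderColimitsOfShape J where
  colimitsOfShape_le := by
    rintro X ⟨h⟩ f hf
    refine h.isColimit.hom_ext fun j ↦ ?_
    have hj : f • 𝟙 (h.diag.obj j) = 0 := h.prop_diag_obj j f hf
    rw [Linear.comp_smul, Category.comp_id, comp_zero]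
    exact (congrArg _ (Category.id_comp _).symm).trans
      ((Linear.smul_comp _ _ _ _ _ _).symm.trans (by rw [hj, zero_comp]))

instance (f : R) : (invertibleSMul f : ObjectProperty C).IsClosedUnderIsomorphisms where
  of_iso {X Y} e hX := by
    have : IsIso (f • 𝟙 X) := hX
    have he : f • 𝟙 Y = e.inv ≫ (f • 𝟙 X) ≫ e.hom := by
      rw [Linear.smul_comp, Linear.comp_smul, Category.id_comp, e.inv_hom_id]
    change IsIso (f • 𝟙 Y)
    rw [he]
    infer_instance

instance (f : R) (J : Type*) [Category* J] :
    (invertibleSMul f : ObjectProperty C).IsClosedUnderColimitsOfShape J where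
  colimitsOfShape_le := by
    rintro X ⟨h⟩
    have (j : J) : IsIso ((f • 𝟙 h.diag : h.diag ⟶ h.diag).app j) := h.prop_diag_obj j
    have : IsIso (f • 𝟙 h.diag) := NatIso.isIso_of_isIso_app _
    let e : X ≅ X := h.isColimit.coconePointsIsoOfNatIso h.isColimit (asIso (f • 𝟙 h.diag))
    have he : e.hom = f • 𝟙 X := h.isColimit.hom_ext fun j ↦ by
      refine (h.isColimit.comp_coconePointsIsoOfNatIso_hom _ _ j).trans ?_
      simp [Linear.smul_comp, Linear.comp_smul]
    change IsIso (f • 𝟙 X)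
    rw [← he]
    infer_instance

lemma invertibleSMul_pow {f : R} {X : C} (hX : invertibleSMul f X) (n : ℕ) :
    invertibleSMul (f ^ n) X := by
  have h : IsUnit (f • (1 : End X)) := (isUnit_iff_isIso _).2 hX
  have hn := h.pow n
  rw [smul_pow, one_pow] at hn
  exact (isUnit_iff_isIso _).1 hn

section Functor

variable {D : Type*} [Category* D] [Preadditive D] [Linear R D] (F : C ⥤ D) [F.Linear R]

lemma annihilatedBy_obj [F.PreservesZeroMorphisms] {l : List R} {X : C}
    (hX : annihilatedBy l X) : annihilatedBy l (F.obj X) := fun f hf ↦ by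
  rw [← CategoryTheory.Functor.map_id, ← F.map_smul, hX f hf, F.map_zero]

lemma invertibleSMul_obj {f : R} {X : C} (hX : invertibleSMul f X) :
    invertibleSMul f (F.obj X) := by
  have : IsIso (f • 𝟙 X) := hX
  change IsIso (f • 𝟙 (F.obj X))
  rw [← CategoryTheory.Functor.map_id, ← F.map_smul]
  infer_instance

end Functor

lemma eq_zero_of_invertibleSMul {f : R} {X Y : C} (hX : f • 𝟙 X = 0) (hY : invertibleSMul f Y)
    (g : X ⟶ Y) : g = 0 := by
  have : IsIso (f • 𝟙 Y) := hY
  rw [← cancel_mono (f • 𝟙 Y), zero_comp, Linear.comp_smul, ← Linear.smul_comp, Category.comp_id,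
    ← Category.id_comp g, ← Linear.smul_comp, hX, zero_comp]

variable [HasZeroObject C] [HasShift C ℤ] [∀ n : ℤ, (shiftFunctor C n).Additive]
  [Pretriangulated C]

variable (C) in
/-- The objects `Y` whose Koszul object `Y // (f₁, …, fₙ)`, obtained by taking successively the
cones of the multiplications by `f₁, …, fₙ`, vanishes. -/
def koszulAcyclic : List R → ObjectProperty C
  | [] => IsZero
  | f :: l => fun Y ↦ ∃ (Z : C) (p : Y ⟶ Z) (q : Z ⟶ Y⟦(1 : ℤ)⟧),
      Triangle.mk (f • 𝟙 Y) p q ∈ distTriang C ∧ koszulAcyclic l Z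

lemma eq_zero_of_koszulAcyclic {l : List R} {X Y : C} (hX : annihilatedBy l X)
    (hY : koszulAcyclic C l Y) (g : X ⟶ Y) : g = 0 := by
  induction l generalizing Y with
  | nil => exact hY.eq_of_tgt _ _
  | cons f l ih =>
    obtain ⟨Z, p, q, hT, hZ⟩ := hY
    obtain ⟨k, rfl⟩ : ∃ k, g = k ≫ (f • 𝟙 Y) := Triangle.coyoneda_exact₂ _ hT g
      (ih (fun f' hf' ↦ hX f' (List.mem_cons_of_mem f hf')) hZ (g ≫ p))
    rw [Linear.comp_smul, ← Linear.smul_comp, Category.comp_id, ← Category.id_comp k,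
      ← Linear.smul_comp, hX f List.mem_cons_self, zero_comp]

lemma koszulAcyclic_of_isColimit {l : List R} {J : Type*} {Y : J → C} {c : Cofan Y}
    (hc : IsColimit c) (hY : ∀ j, koszulAcyclic C l (Y j)) : koszulAcyclic C l c.pt := by
  induction l generalizing Y with
  | nil => exact (IsZero.iff_id_eq_zero _).2 (Cofan.IsColimit.hom_ext hc _ _ fun j ↦
      (hY j).eq_of_src _ _)
  | cons f l ih =>
    choose Z p q hT hZ using hY
    obtain ⟨Z', p', q', hT'⟩ := distinguished_cocone_triangle (f • 𝟙 c.pt)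
    let φ (j : J) := completeDistinguishedTriangleMorphism _ _ (hT j) hT' (c.inj j) (c.inj j)
      (show (f • 𝟙 (Y j)) ≫ c.inj j = c.inj j ≫ (f • 𝟙 c.pt) by
        rw [Linear.smul_comp, Linear.comp_smul, Category.id_comp, Category.comp_id])
    obtain ⟨hZ'⟩ := nonempty_isColimit_hom₃ hT hT' φ hc hc
    exact ⟨Z', p', q', hT', ih hZ' hZ⟩

variable [∀ n : ℤ, (shiftFunctor C n).Linear R]

instance (f : R) : (invertibleSMul f : ObjectProperty C).IsTriangulated where
  exists_zero := ⟨0, isZero_zero C, (isZero_zero C).isIso (isZero_zero C) _⟩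
  isStableUnderShiftBy n := ⟨fun _ hX ↦ invertibleSMul_obj (shiftFunctor C n) hX⟩
  ext₂' T hT h₁ h₃ := ObjectProperty.le_isoClosure _ _
    (isIso₂_of_isIso₁₃ (T := T) (T' := T) {
      hom₁ := f • 𝟙 _
      hom₂ := f • 𝟙 _
      hom₃ := f • 𝟙 _
      comm₁ := by simp
      comm₂ := by simp
      comm₃ := by simp [Functor.map_smul] } hT hT h₁ h₃)

lemma eq_zero_of_trW_smul (P : ObjectProperty C) [P.IsTriangulated] {f : R} {E X Z : C}
    {p : E ⟶ Z} {q : Z ⟶ E⟦(1 : ℤ)⟧} (hT : Triangle.mk (f • 𝟙 E) p q ∈ distTriang C)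
    (hE : P.rightOrthogonal E) (hX : P.trW (f • 𝟙 X)) (g : X ⟶ Z) : g = 0 := by
  have bijective_smul {E : C} (hE : P.rightOrthogonal E) :
      Function.Bijective fun k : X ⟶ E ↦ f • k := by
    rw [← P.isLocal_trW] at hE
    simpa using hE _ hX
  have hgq : g ≫ q = 0 := (bijective_smul (P.rightOrthogonal.le_shift (1 : ℤ) _ hE)).injective <| by
    have : q ≫ (f • 𝟙 E)⟦(1 : ℤ)⟧' = 0 := comp_distTriang_mor_zero₃₁ _ hT
    rw [Functor.map_smul, CategoryTheory.Functor.map_id, Linear.comp_smul, Category.comp_id] at this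
    simp [← Linear.comp_smul, this]
  obtain ⟨k, rfl⟩ : ∃ k, g = k ≫ p := Triangle.coyoneda_exact₃ _ hT g hgq
  obtain ⟨k', rfl⟩ := (bijective_smul hE).surjective k
  have : (f • 𝟙 E) ≫ p = 0 := comp_distTriang_mor_zero₁₂ _ hT
  rw [Linear.smul_comp, Category.id_comp] at this
  simp [← Linear.comp_smul, this]

lemma invertibleSMul_of_telescope {A Z : C} (f : R) (t : A ⟶ A) {p : A ⟶ Z} {q : Z ⟶ A⟦(1 : ℤ)⟧}
    (hT : Triangle.mk (𝟙 A - f • t) p q ∈ distTriang C) : invertibleSMul f Z := by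
  -- `t` induces an inverse `τ` of `f` on `Z`, up to an error `e` of square zero.
  let φ := completeDistinguishedTriangleMorphism _ _ hT hT t t
    (show (𝟙 A - f • t) ≫ t = t ≫ (𝟙 A - f • t) by simp)
  let τ : Z ⟶ Z := φ.hom₃
  let e : Z ⟶ Z := f • τ - 𝟙 Z
  have hp : (𝟙 A - f • t) ≫ p = 0 := comp_distTriang_mor_zero₁₂ _ hT
  have hq : q ≫ (𝟙 A - f • t)⟦(1 : ℤ)⟧' = 0 := comp_distTriang_mor_zero₃₁ _ hT
  have hpτ : p ≫ τ = t ≫ p := φ.comm₂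
  have hqτ : q ≫ t⟦(1 : ℤ)⟧' = τ ≫ q := φ.comm₃
  have hpe : p ≫ e = 0 := by
    rw [Preadditive.sub_comp, Linear.smul_comp, sub_eq_zero] at hp
    rw [Preadditive.comp_sub, Linear.comp_smul, hpτ, ← hp, Category.comp_id, Category.id_comp,
      sub_self]
  have heq : e ≫ q = 0 := by
    rw [Functor.map_sub, Functor.map_smul, Preadditive.comp_sub, Linear.comp_smul,
      CategoryTheory.Functor.map_id, sub_eq_zero] at hq
    rw [Preadditive.sub_comp, Linear.smul_comp, ← hqτ, ← hq, Category.comp_id, Category.id_comp,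
      sub_self]
  obtain ⟨k, hk⟩ : ∃ k, e = k ≫ p := Triangle.coyoneda_exact₃ _ hT e heq
  have hee : e ≫ e = 0 := by
    nth_rw 1 [hk]
    rw [Category.assoc, hpe, comp_zero]
  have hfτ : IsUnit (f • End.of τ) := by
    have : IsUnit (1 + End.of e) := IsNilpotent.isUnit_one_add ⟨2, (pow_two (End.of e)).trans hee⟩
    rwa [← add_sub_cancel (1 : End Z) (f • End.of τ)]
  rw [← smul_one_mul] at hfτ
  exact (isUnit_iff_isIso _).1 (((Commute.one_left (End.of τ)).smul_left f).isUnit_mul_iff.1 hfτ).1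

lemma koszulAcyclic_le [IsTriangulated C] [HasCoproductsOfShape ℕ C]
    (P : ObjectProperty C) [P.IsTriangulated]
    [P.IsClosedUnderIsomorphisms] [P.IsClosedUnderColimitsOfShape (Discrete ℕ)]
    {l : List R} (hP : ∀ f ∈ l, invertibleSMul f ≤ P) : koszulAcyclic C l ≤ P := by
  induction l with
  | nil => exact fun Y hY ↦ P.prop_of_isZero hY
  | cons f l ih =>
    rintro Y ⟨Z, p, q, hT, hZ⟩
    refine prop_of_prop_telescope (fun _ ↦ Y) P (fun _ ↦ f • 𝟙 Y)
      (fun _ ↦ .mk P hT (ih (fun f' hf' ↦ hP f' (List.mem_cons_of_mem f hf')) _ hZ)) ?_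
    have hσ : sequenceShift (fun _ ↦ Y) (fun _ ↦ f • 𝟙 Y) =
        f • sequenceShift (fun _ ↦ Y) fun _ ↦ 𝟙 Y :=
      Sigma.hom_ext _ _ fun n ↦ by simp [ι_sequenceShift, Linear.comp_smul]
    obtain ⟨Z', p', q', hT'⟩ := distinguished_cocone_triangle
      (𝟙 _ - f • sequenceShift (fun _ : ℕ ↦ Y) fun _ ↦ 𝟙 Y)
    rw [hσ]
    exact .mk P hT' (hP f List.mem_cons_self _ (invertibleSMul_of_telescope f _ hT'))

end Linear

section PreservesColimits

variable {A : Type*} [Category* A] [Abelian A] {J : Type*} [Category* J]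

lemma exact_of_exact_evaluation (S : ShortComplex (J ⥤ A))
    (hS : ∀ j, (S.map ((evaluation J A).obj j)).Exact) : S.Exact := by
  rw [ShortComplex.exact_iff_isZero_homology]
  refine Functor.isZero _ fun j ↦ ?_
  exact ((ShortComplex.exact_iff_isZero_homology _).1 (hS j)).of_iso
    (S.mapHomologyIso ((evaluation J A).obj j)).symm

variable {B : Type*} [Category* B] {G₁ G₂ G₃ : B ⥤ A} {α : G₁ ⟶ G₂} {β : G₂ ⟶ G₃}
  (w : ∀ K, α.app K ≫ β.app K = 0)

lemma preservesColimitsOfShape_of_isLimit_kernelFork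
    [HasColimitsOfShape J A] [HasExactColimitsOfShape J A]
    (h : ∀ K, IsLimit (KernelFork.ofι (α.app K) (w K)))
    [PreservesColimitsOfShape J G₂] [PreservesColimitsOfShape J G₃] :
    PreservesColimitsOfShape J G₁ := ⟨fun {F} ↦ ⟨fun {c} hc ↦ by
  let S : ShortComplex (J ⥤ A) :=
    .mk (Functor.whiskerLeft F α) (Functor.whiskerLeft F β) (by ext j; exact w (F.obj j))
  have hS : S.Exact := exact_of_exact_evaluation S fun j ↦ ShortComplex.exact_of_f_is_kernel _ (h _)
  have (K : B) : Mono (α.app K) := mono_of_isLimit_fork (h K)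
  have : Mono S.f := @NatTrans.mono_of_mono_app _ _ _ _ _ _ S.f fun j ↦ this (F.obj j)
  let z : colimit (F ⋙ G₁) ⟶ G₁.obj c.pt := colimit.desc (F ⋙ G₁) (G₁.mapCocone c)
  have ι_z (j : J) : colimit.ι (F ⋙ G₁) j ≫ z ≫ α.app c.pt = α.app (F.obj j) ≫ G₂.map (c.ι.app j) :=
    (Category.assoc _ _ _).symm.trans ((congrArg (· ≫ α.app c.pt) (colimit.ι_desc _ j)).trans
      (α.naturality _))
  have hz := colim.map_mono' S.f (colimit.isColimit (F ⋙ G₁)) (isColimitOfPreserves G₂ hc)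
    (z ≫ α.app c.pt) ι_z
  have hS' := colim.exact_mapShortComplex hS (colimit.isColimit (F ⋙ G₁))
    (isColimitOfPreserves G₂ hc) (isColimitOfPreserves G₃ hc) (z ≫ α.app c.pt) (β.app c.pt) ι_z
    (fun j ↦ β.naturality _)
  obtain ⟨r, hr⟩ : ∃ r : G₁.obj c.pt ⟶ colimit (F ⋙ G₁), r ≫ z ≫ α.app c.pt = α.app c.pt :=
    @ShortComplex.Exact.lift' _ _ _ _ _ hS' _ (α.app c.pt) (w c.pt) hz
  have hz : IsIso z := ⟨r, by rw [← cancel_mono (z ≫ α.app c.pt), Category.assoc, hr]; simp,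
    by rw [← cancel_mono (α.app c.pt), Category.assoc, hr, Category.id_comp]⟩
  have : IsIso ((colimit.isColimit (F ⋙ G₁)).desc (G₁.mapCocone c)) := hz
  exact ⟨IsColimit.ofPointIso (colimit.isColimit (F ⋙ G₁))⟩⟩⟩

lemma preservesColimitsOfShape_of_isColimit_cokernelCofork
    (h : ∀ K, IsColimit (CokernelCofork.ofπ (β.app K) (w K)))
    [PreservesColimitsOfShape J G₁] [PreservesColimitsOfShape J G₂] :
    PreservesColimitsOfShape J G₃ := ⟨fun {F} ↦ ⟨fun {c} hc ↦ by
  have (K : B) : Epi (β.app K) := epi_of_isColimit_cofork (h K)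
  let t (s : Cocone (F ⋙ G₃)) : G₂.obj c.pt ⟶ s.pt := (isColimitOfPreserves G₂ hc).desc
    ((Cocone.precompose (Functor.whiskerLeft F β)).obj s)
  have ι_t (s : Cocone (F ⋙ G₃)) (j : J) :
      G₂.map (c.ι.app j) ≫ t s = β.app (F.obj j) ≫ s.ι.app j :=
    (isColimitOfPreserves G₂ hc).fac _ j
  have ht (s : Cocone (F ⋙ G₃)) : α.app c.pt ≫ t s = 0 :=
    (isColimitOfPreserves G₁ hc).hom_ext fun j ↦ by
      refine (α.naturality_assoc (c.ι.app j) (t s)).trans ?_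
      rw [ι_t, ← Category.assoc]
      exact (congrArg (· ≫ s.ι.app j) (w (F.obj j))).trans (zero_comp.trans comp_zero.symm)
  let d (s : Cocone (F ⋙ G₃)) := CokernelCofork.IsColimit.desc' (h c.pt) (t s) (ht s)
  have π_d (s : Cocone (F ⋙ G₃)) : β.app c.pt ≫ (d s).1 = t s := (d s).2
  refine ⟨fun s ↦ (d s).1, fun s j ↦ ?_, fun s m hm ↦ ?_⟩
  · rw [← cancel_epi (β.app (F.obj j)), ← ι_t]
    exact ((congrArg (G₂.map (c.ι.app j) ≫ ·) (π_d s)).symm.trans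
      (β.naturality_assoc (c.ι.app j) (d s).1)).symm
  · rw [← cancel_epi (β.app c.pt), π_d]
    refine (isColimitOfPreserves G₂ hc).hom_ext fun j ↦ ?_
    refine (β.naturality_assoc (c.ι.app j) m).trans ?_
    exact (congrArg (β.app (F.obj j) ≫ ·) (hm j)).trans (ι_t s j).symm⟩⟩

end PreservesColimits

section HomologyColimits

open HomologicalComplex

variable {A : Type*} [Category* A] [Abelian A] {ι : Type*} {c : ComplexShape ι}

lemma f_comp_toCycles {K L : HomologicalComplex A c} (φ : K ⟶ L) (i j : ι) :
    φ.f i ≫ L.toCycles i j = K.toCycles i j ≫ cyclesMap φ j := by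
  rw [← cancel_mono (L.iCycles j)]
  simp

variable {J : Type*} [Category* J] [HasColimitsOfShape J A] [HasExactColimitsOfShape J A] (c)

instance preservesColimitsOfShape_cyclesFunctor (i : ι) :
    PreservesColimitsOfShape J (cyclesFunctor A c i) :=
  preservesColimitsOfShape_of_isLimit_kernelFork
    (α := ({ app K := K.iCycles i, naturality _ _ φ := cyclesMap_i φ i } :
      cyclesFunctor A c i ⟶ eval A c i))
    (β := ({ app K := K.d i (c.next i), naturality _ _ φ := φ.comm i (c.next i) } :
      eval A c i ⟶ eval A c (c.next i)))
    (fun K ↦ K.iCycles_d i _) fun K ↦ K.cyclesIsKernel i _ rfl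

instance preservesColimitsOfShape_homologyFunctor (i : ι) :
    PreservesColimitsOfShape J (homologyFunctor A c i) :=
  preservesColimitsOfShape_of_isColimit_cokernelCofork
    (α := ({ app K := K.toCycles (c.prev i) i, naturality _ _ φ := f_comp_toCycles φ _ _ } :
      eval A c (c.prev i) ⟶ cyclesFunctor A c i))
    (β := natTransHomologyπ A c i)
    (fun K ↦ K.toCycles_comp_homologyπ _ _) fun K ↦ K.homologyIsCokernel _ i rfl

instance isStableUnderColimitsOfShape_quasiIso :
    (quasiIso A c).IsStableUnderColimitsOfShape J where
  condition F F' K K' hK hK' f hf φ hφ := by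
    refine (quasiIso_iff _).2 fun i ↦ (quasiIsoAt_iff_isIso_homologyMap _ _).2 ?_
    refine MorphismProperty.IsStableUnderColimitsOfShape.condition (W := .isomorphisms A) _ _ _ _
      (isColimitOfPreserves (homologyFunctor A c i) hK)
      (isColimitOfPreserves (homologyFunctor A c i) hK')
      (Functor.whiskerRight f (homologyFunctor A c i)) (fun j ↦ ?_) _ fun j ↦ ?_
    · exact (quasiIsoAt_iff_isIso_homologyMap _ _).1 ((quasiIso_iff _).1 (hf j) i)
    · exact ((homologyFunctor A c i).map_comp _ _).symm.trans
        ((congrArg _ (hφ j)).trans ((homologyFunctor A c i).map_comp _ _))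

end HomologyColimits

section DerivedCoproducts

open DerivedCategory

variable {A : Type u} [Category.{v} A] [Abelian A]

lemma exists_quasiIso_homotopy_zero [HasDerivedCategory.{w'} A] {K L : CochainComplex A ℤ}
    {f : K ⟶ L} (h : Q.map f = 0) :
    ∃ (K' : CochainComplex A ℤ) (t : K' ⟶ K) (_ : QuasiIso t), Nonempty (Homotopy (t ≫ f) 0) := by
  have hf : Qh.map ((HomotopyCategory.quotient A (.up ℤ)).map f) = Qh.map 0 := by
    have := quotientCompQhIso_hom_naturality f
    rw [h, comp_zero, ← zero_comp (X := Qh.obj _), cancel_mono] at this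
    exact this.trans (Functor.map_zero _ _ _).symm
  rw [MorphismProperty.map_eq_iff_precomp Qh (HomotopyCategory.quasiIso _ _)] at hf
  obtain ⟨X, s, hs, e⟩ := hf
  obtain ⟨X, rfl⟩ := HomotopyCategory.quotient_obj_surjective X
  obtain ⟨s, rfl⟩ := (HomotopyCategory.quotient _ _).map_surjective s
  rw [HomotopyCategory.quotient_map_mem_quasiIso_iff] at hs
  refine ⟨X, s, hs, ⟨HomotopyCategory.homotopyOfEq _ _ ?_⟩⟩
  rw [Functor.map_comp, e, comp_zero, Functor.map_zero]

variable {J : Type*} [HasCoproductsOfShape J A]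

/-- Homotopies to zero assemble along a coproduct of complexes. -/
noncomputable def sigmaHomotopyZero {K : J → CochainComplex A ℤ} {L : CochainComplex A ℤ}
    {f : ∐ K ⟶ L} (h : ∀ j, Homotopy (Sigma.ι K j ≫ f) 0) : Homotopy f 0 :=
  have hX (n : ℤ) : IsColimit (Cofan.mk ((∐ K).X n) fun j ↦ (Sigma.ι K j).f n) :=
    isColimitCofanMkObjOfIsColimit (HomologicalComplex.eval A (.up ℤ) n) _ _
      (coproductIsCoproduct K)
  { hom n m := Cofan.IsColimit.desc (hX n) fun j ↦ (h j).hom n m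
    zero n m hnm := Cofan.IsColimit.hom_ext (hX n) _ _ fun j ↦
      (Cofan.IsColimit.fac (hX n) _ j).trans (((h j).zero n m hnm).trans comp_zero.symm)
    comm n := Cofan.IsColimit.hom_ext (hX n) _ _ fun j ↦ by
      have fac (n m : ℤ) : (Sigma.ι K j).f n ≫ Cofan.IsColimit.desc (hX n) (fun j ↦ (h j).hom n m) =
        (h j).hom n m := Cofan.IsColimit.fac (hX n) _ j
      have := (h j).comm n
      change (Sigma.ι K j).f n ≫ f.f n = (Sigma.ι K j).f n ≫ _
      rw [dNext_eq _ (show (ComplexShape.up ℤ).Rel n (n + 1) by simp),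
        prevD_eq _ (show (ComplexShape.up ℤ).Rel (n - 1) n by simp),
        HomologicalComplex.zero_f, add_zero] at this ⊢
      rw [← HomologicalComplex.comp_f, this, Preadditive.comp_add, ← Category.assoc,
        (Sigma.ι K j).comm, Category.assoc, fac, ← Category.assoc, fac] }

variable [HasExactColimitsOfShape (Discrete J) A]

lemma quasiIso_sigmaMap {K L : J → CochainComplex A ℤ} (f : ∀ j, K j ⟶ L j)
    (hf : ∀ j, QuasiIso (f j)) : QuasiIso (Limits.Sigma.map f) :=
  MorphismProperty.colimMap (W := HomologicalComplex.quasiIso A (.up ℤ)) _ fun j ↦ hf j.as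

variable [HasDerivedCategory.{w'} A]

lemma eq_zero_of_map_sigmaι_comp_eq_zero {K : J → CochainComplex A ℤ} {Y : DerivedCategory A}
    (g : Q.obj (∐ K) ⟶ Y) (hg : ∀ j, Q.map (Sigma.ι K j) ≫ g = 0) : g = 0 := by
  let e : Q.obj (Q.objPreimage Y) ≅ Y := Q.objObjPreimageIso Y
  obtain ⟨Y', h, s, hs, hgs⟩ := left_fac (g ≫ e.inv)
  have hh (j : J) : Q.map (Sigma.ι K j ≫ h) = 0 := by
    have : Q.map h = (g ≫ e.inv) ≫ Q.map s := by rw [hgs]; simp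
    rw [Q.map_comp, this, ← Category.assoc, ← Category.assoc, hg]; simp
  choose K' t ht H using fun j ↦ exists_quasiIso_homotopy_zero (hh j)
  have H' : Homotopy (Limits.Sigma.map t ≫ h) 0 := sigmaHomotopyZero fun j ↦
    (Homotopy.ofEq (by rw [← Category.assoc, Sigma.ι_map, Category.assoc])).trans (H j).some
  have := quasiIso_sigmaMap t ht
  have hQ := Q_map_eq_of_homotopy _ H'
  rw [Functor.map_comp, Functor.map_zero] at hQ
  have hh : Q.map h = 0 := by rw [← cancel_epi (Q.map (Limits.Sigma.map t)), hQ, comp_zero]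
  rw [← cancel_mono e.inv, hgs, hh, zero_comp, zero_comp]

lemma exists_map_sigmaι_comp_eq {K : J → CochainComplex A ℤ} {Y : DerivedCategory A}
    (g : ∀ j, Q.obj (K j) ⟶ Y) : ∃ g' : Q.obj (∐ K) ⟶ Y, ∀ j, Q.map (Sigma.ι K j) ≫ g' = g j := by
  let e : Q.obj (Q.objPreimage Y) ≅ Y := Q.objObjPreimageIso Y
  choose K' s hs h hg using fun j ↦ right_fac (g j ≫ e.inv)
  have := quasiIso_sigmaMap s fun j ↦ (isIso_Q_map_iff_quasiIso _ _).1 (hs j)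
  refine ⟨inv (Q.map (Limits.Sigma.map s)) ≫ Q.map (Sigma.desc h) ≫ e.hom, fun j ↦ ?_⟩
  rw [← cancel_epi (Q.map (s j)), ← Category.assoc, ← Q.map_comp, ← Sigma.ι_map, Q.map_comp,
    Category.assoc, IsIso.hom_inv_id_assoc, ← Q.map_comp_assoc, Sigma.ι_desc, ← cancel_mono e.inv,
    Category.assoc, e.hom_inv_id, Category.comp_id, Category.assoc, hg, IsIso.hom_inv_id_assoc]

instance preservesColimitsOfShape_discrete_Q :
    PreservesColimitsOfShape (Discrete J) (Q (C := A)) := by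
  refine @preservesColimitsOfShape_of_discrete _ _ _ _ _ _ fun K ↦ ?_
  refine preservesColimit_of_preserves_colimit_cocone (coproductIsCoproduct K) ?_
  refine (isColimitMapCoconeCofanMkEquiv Q _ _).symm ?_
  refine Cofan.IsColimit.mk _ (fun s ↦ (exists_map_sigmaι_comp_eq s.inj).choose)
    (fun s ↦ (exists_map_sigmaι_comp_eq s.inj).choose_spec) fun s m hm ↦ sub_eq_zero.1 ?_
  refine eq_zero_of_map_sigmaι_comp_eq_zero _ fun j ↦ ?_
  rw [Preadditive.comp_sub, sub_eq_zero]
  exact (hm j).trans ((exists_map_sigmaι_comp_eq s.inj).choose_spec j).symm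

instance hasCoproductsOfShape_derivedCategory : HasCoproductsOfShape J (DerivedCategory A) where
  has_colimit F := by
    let K : J → CochainComplex A ℤ := fun j ↦ Q.objPreimage (F.obj ⟨j⟩)
    exact hasColimit_of_iso (F := Discrete.functor K ⋙ Q)
      (Discrete.natIso fun j ↦ (Q.objObjPreimageIso (F.obj j)).symm)

instance preservesColimitsOfShape_discrete_derivedHomologyFunctor (n : ℤ) :
    PreservesColimitsOfShape (Discrete J) (homologyFunctor A n) := by
  have : PreservesColimitsOfShape (Discrete J) (Q ⋙ homologyFunctor A n) :=
    preservesColimitsOfShape_of_natIso (homologyFunctorFactors A n).symm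
  refine ⟨fun {F} ↦ ?_⟩
  let G : Discrete J ⥤ CochainComplex A ℤ := Discrete.functor fun j ↦ Q.objPreimage (F.obj ⟨j⟩)
  have : PreservesColimit (G ⋙ Q) (homologyFunctor A n) :=
    preservesColimit_of_preserves_colimit_cocone (isColimitOfPreserves Q (colimit.isColimit G))
      (isColimitOfPreserves (Q ⋙ homologyFunctor A n) (colimit.isColimit G))
  exact preservesColimit_of_iso_diagram (K₁ := G ⋙ Q) _
    (Discrete.natIso fun j ↦ Q.objObjPreimageIso (F.obj j))

instance preservesColimitsOfShape_discrete_singleFunctor (n : ℤ) :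
    PreservesColimitsOfShape (Discrete J) (singleFunctor A n) :=
  have : PreservesColimitsOfShape (Discrete J) (HomologicalComplex.single A (.up ℤ) n ⋙ Q) :=
    inferInstance
  this

end DerivedCoproducts

section Localizing

instance isClosedUnderColimitsOfShape_leftOrthogonal {C : Type*} [Category* C] [HasZeroMorphisms C]
    (P : ObjectProperty C) (J : Type*) [Category* J] :
    P.leftOrthogonal.IsClosedUnderColimitsOfShape J where
  colimitsOfShape_le := by
    rintro X ⟨h⟩ Y g hY
    exact h.isColimit.hom_ext fun j ↦ (h.prop_diag_obj j _ hY).trans comp_zero.symm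

variable {T : Type u} [Category.{v} T] [Preadditive T] [HasZeroObject T]
  [HasShift T ℤ] [∀ n : ℤ, (shiftFunctor T n).Additive] [Pretriangulated T]

lemma subset_loc (S : Set T) : S ⊆ Loc.{w} S := fun _ hX _ hL ↦ hL.2 hX

lemma loc_subset {S L : Set T} (hL : IsLocalizingSub.{w} L) (h : S ⊆ L) : Loc.{w} S ⊆ L :=
  fun _ hX ↦ hX L ⟨hL, h⟩

lemma isLocalizingSub_loc (S : Set T) : IsLocalizingSub.{w} (Loc.{w} S) where
  zero_mem _ hL := hL.1.zero_mem
  mem_of_iso e hX L hL := hL.1.mem_of_iso e (hX L hL)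
  shift_mem n _ hX L hL := hL.1.shift_mem n (hX L hL)
  cone_mem D hD h₁ h₂ L hL := hL.1.cone_mem D hD (h₁ L hL) (h₂ L hL)
  coprod_mem _ c hc hX L hL := hL.1.coprod_mem _ c hc fun i ↦ hX i L hL

lemma isLocalizingSub_setOf (P : ObjectProperty T) [P.IsTriangulated]
    [P.IsClosedUnderIsomorphisms]
    (hP : ∀ (J : Type w), P.IsClosedUnderColimitsOfShape (Discrete J)) :
    IsLocalizingSub.{w} {X | P X} where
  zero_mem := P.prop_of_isZero (isZero_zero T)
  mem_of_iso e hX := P.prop_of_iso e hX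
  shift_mem n _ hX := P.le_shift n _ hX
  cone_mem D hD h₁ h₂ := P.ext_of_isTriangulatedClosed₃ D hD h₁ h₂
  coprod_mem {J} _ c hc hX := (hP J).colimitsOfShape_le _ ⟨⟨⟨_, c.ι, hc⟩, fun j ↦ hX j.as⟩⟩

/-- The localizing subcategory `Loc S` as a property of objects. -/
def locProperty (S : Set T) : ObjectProperty T := fun X ↦ X ∈ Loc.{w} S

instance (S : Set T) : (locProperty.{w} S).IsClosedUnderIsomorphisms where
  of_iso e hX := (isLocalizingSub_loc S).mem_of_iso e hX

instance (S : Set T) : (locProperty.{w} S).IsTriangulated where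
  exists_zero := ⟨0, isZero_zero T, (isLocalizingSub_loc S).zero_mem⟩
  isStableUnderShiftBy n := ⟨fun _ hX ↦ (isLocalizingSub_loc S).shift_mem n hX⟩
  ext₂' _ hD h₁ h₃ := ObjectProperty.le_isoClosure _ _ <|
    (isLocalizingSub_loc S).cone_mem _ (inv_rot_of_distTriang _ hD)
      ((isLocalizingSub_loc S).shift_mem (-1) h₃) h₁

instance (S : Set T) (J : Type w) :
    (locProperty.{w} S).IsClosedUnderColimitsOfShape (Discrete J) where
  colimitsOfShape_le := by
    rintro X ⟨h⟩
    exact (isLocalizingSub_loc S).coprod_mem _ _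
      ((IsColimit.precomposeHomEquiv Discrete.natIsoFunctor.symm _).symm h.isColimit)
      fun j ↦ h.prop_diag_obj ⟨j⟩

instance (S : Set T) : (locProperty.{w} S).IsClosedUnderColimitsOfShape (Discrete ℕ) :=
  .of_equivalence (Discrete.equivalence (Equiv.ulift.{w}))

lemma rightOrth_loc (S : Set T) :
    rightOrth (Loc.{w} S) = {Y | (ObjectProperty.shiftClosure (· ∈ S) ℤ).rightOrthogonal Y} := by
  ext Y
  constructor
  · rintro hY X g ⟨X', n, e, hX'⟩
    exact hY ((isLocalizingSub_loc S).mem_of_iso e.symm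
      ((isLocalizingSub_loc S).shift_mem n (subset_loc S hX'))) g
  · intro hY X hX g
    have hL := isLocalizingSub_setOf.{w}
      (ObjectProperty.shiftClosure (· ∈ S) ℤ).rightOrthogonal.leftOrthogonal
      fun _ ↦ inferInstance
    exact loc_subset hL
      (fun X hX Y g hY ↦ hY g (ObjectProperty.le_shiftClosure _ _ hX)) hX g hY

end Localizing

section SingleFunctor

open DerivedCategory

variable {A : Type u} [Category.{v} A] [Abelian A] [HasDerivedCategory.{w'} A]

lemma trW_singleFunctor_map (P : ObjectProperty (DerivedCategory A)) [P.IsTriangulated]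
    [P.IsClosedUnderIsomorphisms] {M N : A} (φ : M ⟶ N)
    (hker : P ((singleFunctor A 0).obj (kernel φ)))
    (hcoker : P ((singleFunctor A 0).obj (cokernel φ))) : P.trW ((singleFunctor A 0).map φ) := by
  have hker' : P ((singleFunctor A 0).obj (kernel (factorThruImage φ))) :=
    P.prop_of_iso ((singleFunctor A 0).mapIso
      ((kernelIsoOfEq (image.fac φ)).symm ≪≫ kernelCompMono _ _)) hker
  have hcoker' : P ((singleFunctor A 0).obj (cokernel (image.ι φ))) :=
    P.prop_of_iso ((singleFunctor A 0).mapIso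
      ((cokernelIsoOfEq (image.fac φ)).symm ≪≫ cokernelEpiComp _ _)) hcoker
  let S₁ := ShortComplex.mk (kernel.ι (factorThruImage φ)) (factorThruImage φ)
    (kernel.condition _)
  have hS₁ : S₁.ShortExact := .mk (S₁.exact_of_f_is_kernel (kernelIsKernel _))
  let S₂ := ShortComplex.mk (image.ι φ) (cokernel.π (image.ι φ)) (cokernel.condition _)
  have hS₂ : S₂.ShortExact := .mk (S₂.exact_of_g_is_cokernel (cokernelIsCokernel _))
  rw [← image.fac φ, Functor.map_comp]
  exact P.trW.comp_mem _ _ (.mk' P hS₁.singleTriangle_distinguished hker')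
    (.mk P hS₂.singleTriangle_distinguished hcoker')

end SingleFunctor

section HomologicalCovers

open DerivedCategory

variable {A : Type u} [Category.{v} A] [Abelian A] [HasDerivedCategory.{w'} A]

lemma homologyFunctor_map_shift_eq_zero {X Y : DerivedCategory A} {f : X ⟶ Y}
    (hf : ∀ i, (homologyFunctor A i).map f = 0) (n i : ℤ) :
    (homologyFunctor A i).map (f⟦n⟧') = 0 := by
  rw [← shift_homologyFunctor,
    ← cancel_mono (((homologyFunctor A 0).shiftIso n i _ rfl).hom.app Y), zero_comp]
  exact ((homologyFunctor A 0).shiftIso_hom_naturality n i _ rfl f).trans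
    ((congrArg _ (hf _)).trans comp_zero)

variable [HasCoproductsOfShape ℕ A] [HasExactColimitsOfShape (Discrete ℕ) A]

lemma isIso_one_sub_sequenceShift {X : ℕ → DerivedCategory A} {s : ∀ n, X n ⟶ X (n + 1)}
    (hs : ∀ n i, (homologyFunctor A i).map (s n) = 0) : IsIso (𝟙 _ - sequenceShift X s) := by
  rw [isIso_iff]
  intro i
  have hσ : (homologyFunctor A i).map (sequenceShift X s) = 0 :=
    Cofan.IsColimit.hom_ext
      (isColimitCofanMkObjOfIsColimit (homologyFunctor A i) _ _ (coproductIsCoproduct X)) _ _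
      fun n ↦ by
        change (homologyFunctor A i).map (Sigma.ι X n) ≫ _ = _ ≫ 0
        rw [← Functor.map_comp, ι_sequenceShift, Functor.map_comp, hs, zero_comp, comp_zero]
  rw [Functor.map_sub, hσ, sub_zero]
  infer_instance

lemma le_of_forall_exists_epi_homology (P 𝓔 : ObjectProperty (DerivedCategory A))
    [P.IsTriangulated] [P.IsClosedUnderIsomorphisms] [P.IsClosedUnderColimitsOfShape (Discrete ℕ)]
    (h𝓔 : ∀ X, 𝓔 X → ∃ (K F : DerivedCategory A) (i : K ⟶ F) (p : F ⟶ X) (d : X ⟶ K⟦(1 : ℤ)⟧),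
      Triangle.mk i p d ∈ distTriang _ ∧ P F ∧ (∀ m, Epi ((homologyFunctor A m).map p)) ∧ 𝓔 K) :
    𝓔 ≤ P := by
  intro X hX
  choose K F i p d hT hF hp hK using h𝓔
  have hd (X) (hX : 𝓔 X) (m : ℤ) : (homologyFunctor A m).map (d X hX) = 0 := by
    have := hp X hX m
    have hpd : p X hX ≫ d X hX = 0 := comp_distTriang_mor_zero₂₃ _ (hT X hX)
    rw [← cancel_epi ((homologyFunctor A m).map (p X hX)), ← Functor.map_comp, hpd,
      Functor.map_zero, comp_zero]
  let Y (n : ℕ) : Subtype 𝓔 := Nat.rec ⟨X, hX⟩ (fun _ Y ↦ ⟨K Y.1 Y.2, hK Y.1 Y.2⟩) n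
  let s (n : ℕ) : (Y n).1⟦(n : ℤ)⟧ ⟶ (Y (n + 1)).1⟦((n + 1 : ℕ) : ℤ)⟧ :=
    (d (Y n).1 (Y n).2)⟦(n : ℤ)⟧' ≫
      (shiftFunctorAdd' _ (1 : ℤ) n ((n + 1 : ℕ) : ℤ) (by lia)).inv.app _
  have hs (n : ℕ) : P.trW (s n) :=
    P.trW.comp_mem _ _ (P.trW.shift (.mk' P (rot_of_distTriang _ (hT _ _)) (hF _ _)) (n : ℤ))
      (MorphismProperty.of_isIso P.trW _)
  have hσ : IsIso (𝟙 _ - sequenceShift _ s) := isIso_one_sub_sequenceShift fun n m ↦ by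
    rw [Functor.map_comp, homologyFunctor_map_shift_eq_zero (hd _ _), zero_comp]
  exact P.prop_of_iso ((shiftFunctorZero _ ℤ).app X)
    (prop_of_prop_telescope (fun n ↦ (Y n).1⟦(n : ℤ)⟧) P s hs (MorphismProperty.of_isIso P.trW _))

end HomologicalCovers

section HomologyDetection

open DerivedCategory

variable {A : Type u} [Category.{v} A] [Abelian A] {G : A} [Projective G]

lemma exists_comp_map_homology_single_eq {K : CochainComplex A ℤ} {m : ℤ}
    (α : G ⟶ (HomologicalComplex.homologyFunctor A (.up ℤ) m).obj K) :
    ∃ (φ : (HomologicalComplex.single A (.up ℤ) m).obj G ⟶ K) (a : G ⟶ _),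
      a ≫ (HomologicalComplex.homologyFunctor A (.up ℤ) m).map φ = α := by
  let β : G ⟶ K.homology m := α
  let z : G ⟶ K.cycles m := Projective.factorThru β (K.homologyπ m)
  let φ : (HomologicalComplex.single A (.up ℤ) m).obj G ⟶ K :=
    HomologicalComplex.mkHomFromSingle (z ≫ K.iCycles m) fun j _ ↦ by simp
  have hφ : (HomologicalComplex.singleObjCyclesSelfIso (.up ℤ) m G).inv ≫
      HomologicalComplex.cyclesMap φ m = z := by
    simp [← cancel_mono (K.iCycles m), φ]
  refine ⟨φ, (HomologicalComplex.singleObjHomologySelfIso (.up ℤ) m G).inv, ?_⟩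
  change _ ≫ HomologicalComplex.homologyMap φ m = β
  rw [← HomologicalComplex.singleObjCyclesSelfIso_inv_homologyπ, Category.assoc,
    HomologicalComplex.homologyπ_naturality, ← Category.assoc, hφ, Projective.factorThru_comp]

variable [HasDerivedCategory.{w'} A]

lemma exists_comp_map_homologyFunctor_eq {E : DerivedCategory A} {m : ℤ}
    (α : G ⟶ (homologyFunctor A m).obj E) :
    ∃ (φ : (singleFunctor A m).obj G ⟶ E) (a : G ⟶ _), a ≫ (homologyFunctor A m).map φ = α := by
  let K := Q.objPreimage E
  let e : Q.obj K ≅ E := Q.objObjPreimageIso E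
  let η := homologyFunctorFactors A m
  obtain ⟨φ, a, ha⟩ := exists_comp_map_homology_single_eq
    (α ≫ (homologyFunctor A m).map e.inv ≫ η.hom.app K)
  have hφ : (a ≫ η.inv.app _) ≫ (homologyFunctor A m).map (Q.map φ) =
      α ≫ (homologyFunctor A m).map e.inv := by
    refine (Category.assoc _ _ _).trans ((congrArg _ (η.inv.naturality φ).symm).trans ?_)
    rw [← Category.assoc, ha]
    simp
  refine ⟨Q.map φ ≫ e.hom, a ≫ η.inv.app _, (congrArg _ (Functor.map_comp _ _ _)).trans
    ((Category.assoc _ _ _).symm.trans ((congrArg (· ≫ _) hφ).trans ?_))⟩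
  simp [← Functor.map_comp]

lemma isZero_of_isSeparator (hG : IsSeparator G) {E : DerivedCategory A}
    (hE : ∀ m (φ : (singleFunctor A m).obj G ⟶ E), φ = 0) : IsZero E := by
  have hH (m : ℤ) : IsZero ((homologyFunctor A m).obj E) := by
    refine (IsZero.iff_id_eq_zero _).2 (hG.def _ _ fun α ↦ ?_)
    obtain ⟨φ, a, rfl⟩ := exists_comp_map_homologyFunctor_eq α
    simp [hE m φ]
  have : IsIso (0 : E ⟶ 0) := (isIso_iff _ _).2 fun m ↦
    (hH m).isIso ((homologyFunctor A m).map_isZero (isZero_zero _)) _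
  exact (isZero_zero _).of_iso (asIso (0 : E ⟶ 0))

end HomologyDetection

section Annihilated

open DerivedCategory

variable {R : Type*} [CommRing R] {A : Type u} [Category.{v} A] [Abelian A] [Linear R A]

lemma annihilatedBy_cons_kernel {f : R} {l : List R} {X : A}
    (hX : annihilatedBy l X) : annihilatedBy (f :: l) (kernel (f • 𝟙 X)) := by
  refine List.forall_mem_cons.2 ⟨?_, ObjectProperty.prop_of_mono _ (kernel.ι (f • 𝟙 X)) hX⟩
  rw [← cancel_mono (kernel.ι (f • 𝟙 X)), Linear.smul_comp, Category.id_comp, zero_comp,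
    ← kernel.condition (f • 𝟙 X), Linear.comp_smul, Category.comp_id]

lemma annihilatedBy_cons_cokernel {f : R} {l : List R} {X : A}
    (hX : annihilatedBy l X) : annihilatedBy (f :: l) (cokernel (f • 𝟙 X)) := by
  refine List.forall_mem_cons.2 ⟨?_, ObjectProperty.prop_of_epi _ (cokernel.π (f • 𝟙 X)) hX⟩
  rw [← cancel_epi (cokernel.π (f • 𝟙 X)), Linear.comp_smul, Category.comp_id, comp_zero,
    ← cokernel.condition (f • 𝟙 X), Linear.smul_comp, Category.id_comp]

variable [HasDerivedCategory.{w'} A]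

lemma trW_smul_of_annihilatedBy (P : ObjectProperty (DerivedCategory A)) [P.IsTriangulated]
    [P.IsClosedUnderIsomorphisms] {f : R} {l : List R}
    (hP : (annihilatedBy (f :: l)).map (singleFunctor A 0) ≤ P) {X : DerivedCategory A}
    (hX : ((annihilatedBy l).map (singleFunctor A 0)).shiftClosure ℤ X) : P.trW (f • 𝟙 X) := by
  obtain ⟨_, n, e, M, hM, ⟨e'⟩⟩ := hX
  have hM' : P.trW ((singleFunctor A 0).map (f • 𝟙 M)) :=
    trW_singleFunctor_map P _
      (hP _ ⟨_, annihilatedBy_cons_kernel hM, ⟨Iso.refl _⟩⟩)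
      (hP _ ⟨_, annihilatedBy_cons_cokernel hM, ⟨Iso.refl _⟩⟩)
  let e'' : ((singleFunctor A 0).obj M)⟦n⟧ ≅ X := (shiftFunctor _ n).mapIso e' ≪≫ e.symm
  refine (P.trW.arrow_mk_iso_iff (Arrow.isoMk e'' e'' ?_)).1 (P.trW.shift hM' n)
  simp [Functor.map_smul]

lemma koszulAcyclic_of_rightOrthogonal {G : A} [Projective G] (hG : IsSeparator G) {l : List R}
    {E : DerivedCategory A}
    (hE : (((annihilatedBy l).map (singleFunctor A 0)).shiftClosure ℤ).rightOrthogonal E) :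
    koszulAcyclic (DerivedCategory A) l E := by
  induction l generalizing E with
  | nil =>
    exact isZero_of_isSeparator hG fun m φ ↦ hE φ
      ⟨_, -m, (((singleFunctors A).shiftIso (-m) m 0 (by lia)).app G).symm, G,
        fun _ h ↦ absurd h List.not_mem_nil, ⟨Iso.refl _⟩⟩
  | cons f l ih =>
    obtain ⟨Z, p, q, hT⟩ := distinguished_cocone_triangle (f • 𝟙 E)
    let 𝓠 := ((annihilatedBy (f :: l)).map (singleFunctor A 0)).shiftClosure ℤ
    have h𝓠 : (annihilatedBy (f :: l)).map (singleFunctor A 0) ≤ 𝓠.rightOrthogonal.leftOrthogonal :=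
      fun X hX Y g hY ↦ hY g (ObjectProperty.le_shiftClosure _ _ hX)
    exact ⟨Z, p, q, hT, ih fun X g hX ↦ eq_zero_of_trW_smul 𝓠.rightOrthogonal.leftOrthogonal hT
      (fun X g hX ↦ hX g hE) (trW_smul_of_annihilatedBy _ h𝓠 hX) g⟩

end Annihilated

section Resolutions

open DerivedCategory

variable {A : Type u} [Category.{v} A] [Abelian A] [HasDerivedCategory.{w'} A]

lemma epi_homologyFunctor_map_singleFunctor_map {M N : A} (π : M ⟶ N) [Epi π] (n m : ℤ) :
    Epi ((homologyFunctor A m).map ((singleFunctor A n).map π)) := by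
  obtain hm | rfl | hm := lt_trichotomy m n
  · exact ⟨fun _ _ _ ↦ (isZero_of_isGE ((singleFunctor A n).obj N) n m hm).eq_of_src _ _⟩
  · exact ((MorphismProperty.epimorphisms A).arrow_mk_iso_iff
      (((Functor.mapArrowFunctor _ _).mapIso (singleFunctorCompHomologyFunctorIso A m)).app
        (Arrow.mk π))).2 (.infer_property π)
  · exact ⟨fun _ _ _ ↦ (isZero_of_isLE ((singleFunctor A n).obj N) n m hm).eq_of_src _ _⟩

variable [HasCoproductsOfShape ℕ A] [HasExactColimitsOfShape (Discrete ℕ) A]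

lemma map_singleFunctor_le_of_forall_exists_epi (P : ObjectProperty (DerivedCategory A))
    [P.IsTriangulated] [P.IsClosedUnderIsomorphisms] [P.IsClosedUnderColimitsOfShape (Discrete ℕ)]
    (𝓜 : ObjectProperty A) (h𝓜 : ∀ M, 𝓜 M → ∃ (F : A) (π : F ⟶ M),
      Epi π ∧ P ((singleFunctor A 0).obj F) ∧ 𝓜 (kernel π)) :
    𝓜.map (singleFunctor A 0) ≤ P := by
  refine le_of_forall_exists_epi_homology P _ ?_
  rintro X ⟨M, hM, ⟨e⟩⟩
  obtain ⟨F, π, hπ, hF, hK⟩ := h𝓜 M hM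
  let S := ShortComplex.mk (kernel.ι π) π (kernel.condition π)
  have hS : S.ShortExact := .mk (S.exact_of_f_is_kernel (kernelIsKernel π))
  refine ⟨_, _, (singleFunctor A 0).map (kernel.ι π), (singleFunctor A 0).map π ≫ e.hom,
    e.inv ≫ hS.singleδ, isomorphic_distinguished _ hS.singleTriangle_distinguished _
      (Triangle.isoMk _ _ (Iso.refl _) (Iso.refl _) e.symm ?_ ?_ ?_), hF, fun m ↦ ?_,
    ⟨_, hK, ⟨Iso.refl _⟩⟩⟩
  · exact (Category.comp_id _).trans (Category.id_comp _).symm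
  · exact (Category.assoc _ _ _).trans ((congrArg _ e.hom_inv_id).trans
      ((Category.comp_id _).trans (Category.id_comp _).symm))
  · exact (congrArg _ (CategoryTheory.Functor.map_id _ _)).trans (Category.comp_id _)
  have := epi_homologyFunctor_map_singleFunctor_map π 0 m
  rw [Functor.map_comp]
  infer_instance

end Resolutions

section CyclicModules

open DerivedCategory

variable {R : Type u} [CommRing R]

lemma epi_sigmaDesc_of_forall_exists {J : Type u} {N : J → ModuleCat.{u} R} {M : ModuleCat.{u} R}
    (φ : ∀ j, N j ⟶ M) (hφ : ∀ x : M, ∃ j y, φ j y = x) : Epi (Sigma.desc φ) := by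
  refine (ModuleCat.epi_iff_surjective _).2 fun x ↦ ?_
  obtain ⟨j, y, rfl⟩ := hφ x
  refine ⟨Sigma.ι N j y, ?_⟩
  rw [← ConcreteCategory.comp_apply, Sigma.ι_desc]

lemma annihilatedBy_quotient (l : List R) :
    annihilatedBy l (ModuleCat.of R (R ⧸ Ideal.ofList l)) := by
  intro f hf
  ext
  simpa [Algebra.smul_def] using
    Ideal.Quotient.eq_zero_iff_mem.2 (Ideal.subset_span (show f ∈ {g | g ∈ l} from hf))

variable [HasDerivedCategory.{w'} (ModuleCat.{u} R)]

lemma map_singleFunctor_le_of_forall_exists_quotient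
    (P : ObjectProperty (DerivedCategory (ModuleCat.{u} R))) [P.IsTriangulated]
    [P.IsClosedUnderIsomorphisms] [P.IsClosedUnderColimitsOfShape (Discrete ℕ)]
    [∀ J : Type u, P.IsClosedUnderColimitsOfShape (Discrete J)]
    (𝓜 : ObjectProperty (ModuleCat.{u} R)) [𝓜.IsClosedUnderSubobjects]
    [∀ J : Type u, 𝓜.IsClosedUnderColimitsOfShape (Discrete J)]
    (h𝓜 : ∀ M, 𝓜 M → ∀ x : M, ∃ I : Ideal R, (∀ r ∈ I, r • x = 0) ∧
      𝓜 (ModuleCat.of R (R ⧸ I)) ∧ P (smod R (ModuleCat.of R (R ⧸ I)))) :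
    𝓜.map (singleFunctor (ModuleCat.{u} R) 0) ≤ P := by
  refine map_singleFunctor_le_of_forall_exists_epi P _ fun M hM ↦ ?_
  choose I hI h𝓜I hPI using h𝓜 M hM
  let φ (x : M) : ModuleCat.of R (R ⧸ I x) ⟶ M :=
    ModuleCat.ofHom ((I x).liftQ (LinearMap.toSpanSingleton R M x) (hI x))
  exact ⟨_, _, epi_sigmaDesc_of_forall_exists φ
      fun x ↦ ⟨x, Ideal.Quotient.mk _ 1, one_smul R x⟩,
    P.prop_of_isColimit (isColimitOfPreserves (singleFunctor _ 0) (coproductIsCoproduct _))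
      fun j ↦ hPI j.as,
    𝓜.prop_of_mono (kernel.ι _) (𝓜.prop_colimit _ fun j ↦ h𝓜I j.as)⟩

lemma map_annihilatedBy_le (P : ObjectProperty (DerivedCategory (ModuleCat.{u} R)))
    [P.IsTriangulated] [P.IsClosedUnderIsomorphisms]
    [P.IsClosedUnderColimitsOfShape (Discrete ℕ)]
    [∀ J : Type u, P.IsClosedUnderColimitsOfShape (Discrete J)] {l : List R}
    (hP : P (smod R (ModuleCat.of R (R ⧸ Ideal.ofList l)))) :
    (annihilatedBy l).map (singleFunctor (ModuleCat.{u} R) 0) ≤ P :=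
  map_singleFunctor_le_of_forall_exists_quotient P _ fun M hM x ↦
    have hx : Ideal.ofList l ≤ (LinearMap.toSpanSingleton R M x).ker :=
      Ideal.span_le.2 fun f hf ↦ congr($(hM f hf) x)
    ⟨Ideal.ofList l, hx, annihilatedBy_quotient l, hP⟩

end CyclicModules

section Torsion

open DerivedCategory

variable {R : Type u} [CommRing R] (S : Submonoid R)

variable (R) in
/-- The `R`-modules in which every element is killed by some element of `S`. -/
def torsionModules : ObjectProperty (ModuleCat.{u} R) := fun M ↦ Module.IsTorsion' M S

instance : (torsionModules R S).IsClosedUnderSubobjects where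
  prop_of_mono i _ hM x := by
    obtain ⟨s, hs⟩ := hM (x := i x)
    exact ⟨s, (ModuleCat.mono_iff_injective i).1 inferInstance
      ((map_smul i.hom (s : R) x).trans (hs.trans (map_zero i.hom).symm))⟩

instance (J : Type*) [Category* J] :
    (torsionModules R S).IsClosedUnderColimitsOfShape J where
  colimitsOfShape_le := by
    rintro M ⟨h⟩
    refine (Submodule.isTorsion'_iff_torsion'_eq_top (R := R) S).2 ?_
    have hM : ModuleCat.ofHom (Submodule.torsion' R M S).mkQ = 0 :=
      h.isColimit.hom_ext fun j ↦ by
        ext x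
        obtain ⟨s, hs⟩ := h.prop_diag_obj j (x := x)
        refine (Submodule.Quotient.mk_eq_zero _).2 ⟨s, ?_⟩
        exact (map_smul (h.ι.app j).hom (s : R) x).symm.trans
          ((congrArg _ hs).trans (map_zero (h.ι.app j).hom))
    rw [← Submodule.ker_mkQ (Submodule.torsion' R M S)]
    exact LinearMap.ker_eq_top.2 congr(($hM).hom)

variable [HasDerivedCategory.{w'} (ModuleCat.{u} R)]

lemma map_torsionModules_le (P : ObjectProperty (DerivedCategory (ModuleCat.{u} R)))
    [P.IsTriangulated] [P.IsClosedUnderIsomorphisms]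
    [P.IsClosedUnderColimitsOfShape (Discrete ℕ)]
    [∀ J : Type u, P.IsClosedUnderColimitsOfShape (Discrete J)]
    (hP : ∀ s ∈ S, P (smod R (ModuleCat.of R (R ⧸ Ideal.span {s})))) :
    (torsionModules R S).map (singleFunctor (ModuleCat.{u} R) 0) ≤ P := by
  refine map_singleFunctor_le_of_forall_exists_quotient P _ fun M hM x ↦ ?_
  obtain ⟨s, hs⟩ := hM (x := x)
  refine ⟨Ideal.span {(s : R)}, fun r hr ↦ ?_, fun y ↦ ⟨s, ?_⟩, hP s s.2⟩
  · obtain ⟨t, rfl⟩ := Ideal.mem_span_singleton'.1 hr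
    rw [mul_smul]
    exact (congrArg _ hs).trans (smul_zero t)
  · obtain ⟨y, rfl⟩ := Ideal.Quotient.mk_surjective y
    exact Ideal.Quotient.eq_zero_iff_mem.2
      (Ideal.mul_mem_right y _ (Ideal.mem_span_singleton_self (s : R)))

end Torsion

section Localizations

open DerivedCategory

variable {R : Type u} [CommRing R]

section

variable (S : Submonoid R) (R' : Type u) [CommRing R'] [Algebra R R'] [IsLocalization S R']

lemma torsionModules_kernel_algebraMap :
    torsionModules R S (kernel (ModuleCat.ofHom (Algebra.linearMap R R'))) := by
  intro x
  let ι := kernel.ι (ModuleCat.ofHom (Algebra.linearMap R R'))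
  have hx : algebraMap R R' (ι x) = 0 :=
    congr($(kernel.condition (ModuleCat.ofHom (Algebra.linearMap R R'))) x)
  obtain ⟨s, hs⟩ := (IsLocalization.map_eq_zero_iff S R' _).1 hx
  exact ⟨s, (ModuleCat.mono_iff_injective ι).1 inferInstance
    ((map_smul ι.hom (s : R) x).trans (hs.trans (map_zero ι.hom).symm))⟩

lemma torsionModules_cokernel_algebraMap :
    torsionModules R S (cokernel (ModuleCat.ofHom (Algebra.linearMap R R'))) := by
  intro x
  let π := cokernel.π (ModuleCat.ofHom (Algebra.linearMap R R'))
  obtain ⟨y, rfl⟩ := (ModuleCat.epi_iff_surjective π).1 inferInstance x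
  obtain ⟨⟨r, s⟩, hrs⟩ := IsLocalization.surj S y
  have hy : (s : R) • y = algebraMap R R' r := by rw [Algebra.smul_def, mul_comm, hrs]
  refine ⟨s, (map_smul π.hom (s : R) y).symm.trans ((congrArg π.hom hy).trans ?_)⟩
  exact congr($(cokernel.condition (ModuleCat.ofHom (Algebra.linearMap R R'))) r)

end

lemma invertibleSMul_of_isUnit_algebraMap {f : R} (R' : Type u) [CommRing R'] [Algebra R R']
    (hf : IsUnit (algebraMap R R' f)) : invertibleSMul f (ModuleCat.of R R') := by
  refine (ConcreteCategory.isIso_iff_bijective _).2 ?_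
  convert (IsUnit.isUnit_iff_mulLeft_bijective.1 hf) using 1
  ext x
  exact Algebra.smul_def f x

variable (R) in
lemma isSeparator_moduleCat_self : IsSeparator (ModuleCat.of R R) :=
  (isSeparator_def _).2 fun M N g h hgh ↦ by
    ext x
    simpa using congr($(hgh (ModuleCat.ofHom (LinearMap.toSpanSingleton R M x))) (1 : R))

variable [HasDerivedCategory.{w'} (ModuleCat.{u} R)]

lemma leftOrthogonal_invertibleSMul_quotient_span_pow (f : R) (n : ℕ) :
    (invertibleSMul f).leftOrthogonal (smod R (ModuleCat.of R (R ⧸ Ideal.span {f ^ n}))) := by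
  intro Y g hY
  refine eq_zero_of_invertibleSMul ?_ (invertibleSMul_pow hY n) g
  have := annihilatedBy_obj (singleFunctor (ModuleCat.{u} R) 0) (annihilatedBy_quotient [f ^ n])
  rw [Ideal.ofList_singleton] at this
  exact this _ (List.mem_singleton_self _)

lemma trW_singleFunctor_map_algebraMap (f : R) (m : ℤ) :
    (invertibleSMul f).leftOrthogonal.trW ((singleFunctor (ModuleCat.{u} R) m).map
      (ModuleCat.ofHom (Algebra.linearMap R (Localization.Away f)))) := by
  have htorsion := map_torsionModules_le (Submonoid.powers f)
    (invertibleSMul f : ObjectProperty (DerivedCategory (ModuleCat.{u} R))).leftOrthogonal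
    (by rintro _ ⟨n, rfl⟩; exact leftOrthogonal_invertibleSMul_quotient_span_pow f n)
  have hW := trW_singleFunctor_map _
    (ModuleCat.ofHom (Algebra.linearMap R (Localization.Away f)))
    (htorsion _ ⟨_, torsionModules_kernel_algebraMap (Submonoid.powers f) _, ⟨Iso.refl _⟩⟩)
    (htorsion _ ⟨_, torsionModules_cokernel_algebraMap (Submonoid.powers f) _, ⟨Iso.refl _⟩⟩)
  exact ((MorphismProperty.arrow_mk_iso_iff _ ((Functor.mapArrowFunctor _ _).mapIso
    ((singleFunctors (ModuleCat.{u} R)).shiftIso (-m) m 0 (by lia)) |>.app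
      (Arrow.mk (ModuleCat.ofHom (Algebra.linearMap R (Localization.Away f))))))).1
    (MorphismProperty.shift _ hW (-m))

lemma exists_singleFunctor_map_algebraMap_comp_eq {f : R} {m : ℤ}
    {E : DerivedCategory (ModuleCat.{u} R)} (hE : invertibleSMul f E)
    (φ : (singleFunctor (ModuleCat.{u} R) m).obj (ModuleCat.of R R) ⟶ E) :
    ∃ ψ, (singleFunctor (ModuleCat.{u} R) m).map
      (ModuleCat.ofHom (Algebra.linearMap R (Localization.Away f))) ≫ ψ = φ := by
  have hE' : (invertibleSMul f).leftOrthogonal.rightOrthogonal E := fun X g hX ↦ hX g hE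
  rw [← ObjectProperty.isLocal_trW] at hE'
  exact (hE' _ (trW_singleFunctor_map_algebraMap f m)).surjective φ

lemma invertibleSMul_le (P : ObjectProperty (DerivedCategory (ModuleCat.{u} R)))
    [P.IsTriangulated] [P.IsClosedUnderIsomorphisms]
    [P.IsClosedUnderColimitsOfShape (Discrete ℕ)]
    [∀ J : Type u, P.IsClosedUnderColimitsOfShape (Discrete J)] {f : R}
    (hP : P (smod R (ModuleCat.of R (Localization.Away f)))) : invertibleSMul f ≤ P := by
  refine le_of_forall_exists_epi_homology P _ fun E hE ↦ ?_
  have hPs (m : ℤ) : P ((singleFunctor _ m).obj (ModuleCat.of R (Localization.Away f))) :=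
    P.prop_of_iso (((singleFunctors (ModuleCat.{u} R)).shiftIso (-m) m 0 (by lia)).app _)
      (P.le_shift (-m) _ hP)
  have hfs (m : ℤ) : invertibleSMul f
      ((singleFunctor _ m).obj (ModuleCat.of R (Localization.Away f))) :=
    invertibleSMul_obj _ (invertibleSMul_of_isUnit_algebraMap _
      (IsLocalization.Away.algebraMap_isUnit f))
  let J : Type u := Σ m, ModuleCat.of R R ⟶ (homologyFunctor _ m).obj E
  let F (j : J) := (singleFunctor _ j.1).obj (ModuleCat.of R (Localization.Away f))
  choose φ a hφ using fun j : J ↦ exists_comp_map_homologyFunctor_eq j.2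
  choose ψ hψ using fun j ↦ exists_singleFunctor_map_algebraMap_comp_eq hE (φ j)
  obtain ⟨K, i, d, hT⟩ := distinguished_cocone_triangle₁ (Sigma.desc ψ)
  have hα (j : J) : ∃ β, β ≫ (homologyFunctor _ j.1).map (Sigma.desc ψ) = j.2 := by
    refine ⟨a j ≫ (homologyFunctor _ j.1).map ((singleFunctor _ j.1).map
      (ModuleCat.ofHom (Algebra.linearMap R (Localization.Away f))) ≫ Sigma.ι F j), ?_⟩
    rw [Category.assoc, ← Functor.map_comp, Category.assoc, Sigma.ι_desc, hψ, hφ]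
  refine ⟨K, _, i, Sigma.desc ψ, d, hT, P.prop_colimit _ fun j ↦ hPs j.as.1, fun m ↦ ?_, ?_⟩
  · refine Preadditive.epi_of_cancel_zero _ fun g hg ↦
      (isSeparator_moduleCat_self R).def _ _ fun α ↦ ?_
    obtain ⟨β, (hβ : β ≫ (homologyFunctor _ m).map (Sigma.desc ψ) = α)⟩ := hα ⟨m, α⟩
    rw [← hβ, Category.assoc, hg, comp_zero, comp_zero]
  · exact ObjectProperty.ext_of_isTriangulatedClosed₁ _ _ hT
      (ObjectProperty.prop_colimit _ _ fun j ↦ hfs j.as.1) hE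

end Localizations

section Main

open DerivedCategory

variable {R : Type u} [CommRing R] [HasDerivedCategory.{w'} (ModuleCat.{u} R)]

lemma shiftClosure_quotient_le_annihilatedBy (l : List R) :
    ObjectProperty.shiftClosure
      (· ∈ ({smod R (ModuleCat.of R (R ⧸ Ideal.ofList l))} : Set (DerivedCategory _))) ℤ ≤
      annihilatedBy l := by
  rintro X ⟨_, n, e, rfl⟩
  exact ObjectProperty.prop_of_mono _ e.hom (annihilatedBy_obj (shiftFunctor _ n)
    (annihilatedBy_obj (singleFunctor _ 0) (annihilatedBy_quotient l)))

lemma rightOrth_loc_quotient (l : List R) :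
    rightOrth (Loc.{u} {smod R (ModuleCat.of R (R ⧸ Ideal.ofList l))}) =
      {E | koszulAcyclic (DerivedCategory (ModuleCat.{u} R)) l E} := by
  refine Set.Subset.antisymm (fun E hE ↦ ?_) ?_
  · have : Projective (ModuleCat.of R R) :=
      (IsProjective.iff_projective _).1 inferInstance
    refine koszulAcyclic_of_rightOrthogonal (isSeparator_moduleCat_self R) ?_
    rintro X g ⟨X', n, e, hX'⟩
    let L := locProperty.{u} {smod R (ModuleCat.of R (R ⧸ Ideal.ofList l))}
    have hL : L X' := map_annihilatedBy_le L (subset_loc _ rfl) _ hX'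
    exact hE (L.prop_of_iso e.symm (L.le_shift n _ hL)) g
  · rw [rightOrth_loc]
    exact fun E hE X g hX ↦
      eq_zero_of_koszulAcyclic (shiftClosure_quotient_le_annihilatedBy l _ hX) hE g

lemma isLocalizingSub_rightOrth_loc_quotient (l : List R) :
    IsLocalizingSub.{u} (rightOrth (Loc.{u} {smod R (ModuleCat.of R (R ⧸ Ideal.ofList l))})) := by
  have hK := rightOrth_loc_quotient l
  rw [rightOrth_loc] at hK ⊢
  refine isLocalizingSub_setOf _ fun J ↦ ⟨?_⟩
  rintro X ⟨h⟩
  exact hK.ge (koszulAcyclic_of_isColimit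
    ((IsColimit.precomposeHomEquiv Discrete.natIsoFunctor.symm _).symm h.isColimit)
    fun j ↦ hK.le (h.prop_diag_obj ⟨j⟩))

lemma smod_localization_mem_rightOrth_loc_quotient {l : List R} {f : R} (hf : f ∈ l) :
    smod R (ModuleCat.of R (Localization.Away f)) ∈
      rightOrth (Loc.{u} {smod R (ModuleCat.of R (R ⧸ Ideal.ofList l))}) := by
  rw [rightOrth_loc]
  exact fun X g hX ↦ eq_zero_of_invertibleSMul
    (shiftClosure_quotient_le_annihilatedBy l X hX f hf)
    (invertibleSMul_obj _ (invertibleSMul_of_isUnit_algebraMap _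
      (IsLocalization.Away.algebraMap_isUnit f))) g

end Main

/-- Theorem: for a finitely generated ideal `I = (f₁, …, fₙ)` of `R`, one has
`Loc(R/I)^⊥ = Loc(R_{f₁}, …, R_{fₙ})` in `D(R)`. -/
theorem rightOrth_loc_quotient_eq_loc_localizations (R : Type u) [CommRing R]
    [HasDerivedCategory.{w'} (ModuleCat.{u} R)] (n : ℕ) (f : Fin n → R) :
    rightOrth (Loc.{u} {smod R (ModuleCat.of R (R ⧸ Ideal.span (Set.range f)))}) =
      Loc.{u} {x | ∃ i : Fin n,
        x = smod R (ModuleCat.of R (Localization.Away (f i)))} := by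
  have hI : Ideal.span (Set.range f) = Ideal.ofList (List.ofFn f) :=
    congrArg _ (Set.ext fun _ ↦ (List.mem_ofFn' f _).symm)
  rw [hI]
  refine Set.Subset.antisymm ?_ (loc_subset (isLocalizingSub_rightOrth_loc_quotient _) ?_)
  · rw [rightOrth_loc_quotient]
    refine koszulAcyclic_le (locProperty.{u} _) fun _ hg ↦ ?_
    obtain ⟨i, rfl⟩ := (List.mem_ofFn' f _).1 hg
    exact invertibleSMul_le _ (subset_loc _ ⟨i, rfl⟩)
  · rintro _ ⟨i, rfl⟩
    exact smod_localization_mem_rightOrth_loc_quotient ((List.mem_ofFn' f _).2 ⟨i, rfl⟩)
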